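/- arXiv:2203.14521 — 2 statements merged into one kernel-verified Lean document; each statement's English description precedes it below -/
import Mathlib

section
/- Let Q be a finite quiver without loops and multiedges and let R be a lluf subquiver of Q with dim DE(R) = dim DE(Q) − 1. Then DE(R) is a facet of DE(Q) if and only if one of the following holds: (1) |π_0(R)| = |π_0(Q)| + 1, each connected component of R is a full subquiver of Q, and the contraction Q/R is acyclic; or (2) |π_0(R)| = |π_0(Q)| and there exists a rank function ρ of R such that (ρ(v)−ρ(w)+1)(ρ(v')−ρ(w')+1) > 0 for any (v,w),(v',w') ∈ Q_1 ∖ R_1. -/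
open scoped BigOperators

/-- The vector `ε_(v,w) = e_v - e_w` in `ℝ^V`. -/
def epsVec {V : Type*} [DecidableEq V] (e : V × V) : V → ℝ :=
  fun u => (if u = e.1 then (1 : ℝ) else 0) - (if u = e.2 then (1 : ℝ) else 0)

/-- The directed edge polytope of the quiver with edge set `E`. -/
def DE {V : Type*} [DecidableEq V] (E : Set (V × V)) : Set (V → ℝ) :=
  convexHull ℝ (epsVec '' E)

/-- The edge relation of a quiver. -/
def edgeRel {V : Type*} (E : Set (V × V)) : V → V → Prop := fun a b => (a, b) ∈ E

/-- Number of connected components (with respect to undirected walks). -/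
noncomputable def numComponents {V : Type*} (E : Set (V × V)) : ℕ :=
  Nat.card (Quot (Relation.EqvGen (edgeRel E)))

/-- `E` admits a rank function. -/
def HasRankFn {V : Type*} (E : Set (V × V)) : Prop :=
  ∃ ρ : V → ℝ, ∀ e ∈ E, ρ e.1 + 1 = ρ e.2

open Classical in
/-- Dimension of a polytope: dimension of its affine hull, `-1` for the empty set. -/
noncomputable def polyDim {V : Type*} (s : Set (V → ℝ)) : ℤ :=
  if s = ∅ then -1 else (Module.finrank ℝ (affineSpan ℝ s).direction : ℤ)

/-- `F` is a face of `P`: `F = P` or `F` is the intersection of `P`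
with a supporting hyperplane. -/
def IsFaceOf {V : Type*} (F P : Set (V → ℝ)) : Prop :=
  F = P ∨ ∃ (l : (V → ℝ) →ₗ[ℝ] ℝ) (c : ℝ), (∀ x ∈ P, l x ≤ c) ∧ F = {x ∈ P | l x = c}

/-- `F` is a facet of `P`: a face of dimension `dim P - 1`. -/
def IsFacetOf {V : Type*} (F P : Set (V → ℝ)) : Prop :=
  IsFaceOf F P ∧ polyDim F = polyDim P - 1

/-- Each connected component of the subquiver `R1` is a full subquiver of `Q1`. -/
def ComponentsFull {V : Type*} (Q1 R1 : Set (V × V)) : Prop :=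
  ∀ v w : V, Relation.EqvGen (edgeRel R1) v w → (v, w) ∈ Q1 → (v, w) ∈ R1

/-- Edge set of the contraction `Q/R`. -/
def contraction {V : Type*} (Q1 R1 : Set (V × V)) :
    Set (Quot (Relation.EqvGen (edgeRel R1)) × Quot (Relation.EqvGen (edgeRel R1))) :=
  {p | ∃ e ∈ Q1 \ R1, p = (Quot.mk _ e.1, Quot.mk _ e.2)}

/-- A quiver is acyclic if it has no closed directed walk of length `> 1`. -/
def IsAcyclicQ {α : Type*} (E : Set (α × α)) : Prop :=
  ¬ ∃ (n : ℕ) (v : Fin (n + 1) → α), 1 < n ∧ v 0 = v (Fin.last n) ∧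
      ∀ i : Fin n, (v i.castSucc, v i.succ) ∈ E

/-!
Linear functionals on `ℝ^V` are potentials `lam : V → ℝ`, taking the value `lam v - lam w` at
`ε_(v,w)`. Since `ε_e` is not in the convex hull of the other edge vectors, `DE R` is a face of
`DE Q` iff some potential equals a constant `c` on the edges of `R` and stays below `c` on the
other edges of `Q`. If `c = 0`, this potential lives on the vertices of `Q/R` and increases strictly
along its edges; such a function exists iff `Q/R` has neither loops nor longer directed cycles, and
`Q/R` has no loops iff the components of `R` are full. If `c ≠ 0`, then `-lam / c` is a rank
function as in the second alternative.

Which case occurs is decided by `dim DE E = |V| - |π₀ E| - [E has a rank function]`: the potentials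
vanishing on all `ε_e` are the functions on `π₀ E`, so they form a space of dimension `|π₀ E|`, and
the affine hull of the `ε_e` misses the origin iff there is a rank function. If
`|π₀ R| = |π₀ Q|`, then `c ≠ 0`, as otherwise `lam`, being constant on the components of `R`, would
be constant on those of `Q`. If `|π₀ R| = |π₀ Q| + 1` and `c ≠ 0`, then `Q` has a rank function too,
and adding `c` times it to `lam` reduces to `c = 0`.
-/

theorem forall_mul_pos_iff {ι R : Type*} [Ring R] [LinearOrder R] [IsStrictOrderedRing R]
    {s : Set ι} {g : ι → R} :
    (∀ i ∈ s, ∀ j ∈ s, 0 < g i * g j) ↔ (∀ i ∈ s, 0 < g i) ∨ ∀ i ∈ s, g i < 0 := by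
  constructor
  · intro h
    by_cases hpos : ∃ i ∈ s, 0 < g i
    · obtain ⟨i, hi, hgi⟩ := hpos
      exact .inl fun j hj => (pos_iff_pos_of_mul_pos (h i hi j hj)).1 hgi
    · push Not at hpos
      exact .inr fun i hi => (hpos i hi).lt_of_ne (left_ne_zero_of_mul (h i hi i hi).ne')
  · rintro (h | h) i hi j hj
    exacts [mul_pos (h i hi) (h j hj), mul_pos_of_neg_of_neg (h i hi) (h j hj)]

section Convex

variable {𝕜 E : Type*} [Ring 𝕜] [LinearOrder 𝕜] [IsStrictOrderedRing 𝕜] [AddCommGroup E]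
  [Module 𝕜 E] {s t : Set E} {l : E →ₗ[𝕜] 𝕜} {c : 𝕜}

theorem convex_union_halfSpace_lt (hs : Convex 𝕜 s) (hl : ∀ x ∈ s, l x ≤ c) :
    Convex 𝕜 (s ∪ {x | l x < c}) := by
  rw [convex_iff_forall_pos]
  intro x hx y hy a b ha hb hab
  have hle : ∀ z ∈ s ∪ {x | l x < c}, l z ≤ c := by
    rintro z (hz | hz)
    exacts [hl z hz, hz.le]
  by_cases hxy : x ∈ s ∧ y ∈ s
  · exact .inl (hs hxy.1 hxy.2 ha.le hb.le hab)
  · right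
    have hlt : a * l x + b * l y < a * c + b * c := by
      by_cases hxs : x ∈ s
      · have hyc : l y < c := hy.resolve_left fun hys => hxy ⟨hxs, hys⟩
        exact add_lt_add_of_le_of_lt (by gcongr; exact hle x hx) (by gcongr)
      · have hxc : l x < c := hx.resolve_left hxs
        exact add_lt_add_of_lt_of_le (by gcongr) (by gcongr; exact hle y hy)
    rwa [← add_mul, hab, one_mul, ← smul_eq_mul, ← smul_eq_mul, ← map_smul, ← map_smul,
      ← map_add] at hlt

theorem sep_convexHull_eq_convexHull (hst : s ⊆ t) (hs : ∀ x ∈ s, l x = c)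
    (hts : ∀ x ∈ t \ s, l x < c) : {x ∈ convexHull 𝕜 t | l x = c} = convexHull 𝕜 s := by
  have hconst : ∀ x ∈ convexHull 𝕜 s, l x = c :=
    convexHull_min hs (convex_hyperplane l.isLinear c)
  have hcover : convexHull 𝕜 t ⊆ convexHull 𝕜 s ∪ {x | l x < c} := by
    refine convexHull_min (fun x hx => ?_)
      (convex_union_halfSpace_lt (convex_convexHull 𝕜 s) fun x hx => (hconst x hx).le)
    by_cases hxs : x ∈ s
    exacts [.inl (subset_convexHull 𝕜 s hxs), .inr (hts x ⟨hx, hxs⟩)]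
  apply Set.Subset.antisymm
  · rintro x ⟨hxt, hxc⟩
    exact (hcover hxt).resolve_right hxc.not_lt
  · exact fun x hx => ⟨convexHull_mono hst hx, hconst x hx⟩

end Convex

theorem vectorSpan_sup_span_singleton {K M : Type*} [Ring K] [AddCommGroup M] [Module K M]
    {s : Set M} {x : M} (hx : x ∈ s) :
    vectorSpan K s ⊔ K ∙ x = Submodule.span K s := by
  have hxs : x ∈ Submodule.span K s := Submodule.subset_span hx
  apply le_antisymm
  · refine sup_le ?_ ((Submodule.span_singleton_le_iff_mem _ _).2 hxs)
    rw [vectorSpan_eq_span_vsub_set_right K hx, Submodule.span_le]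
    rintro _ ⟨y, hy, rfl⟩
    exact Submodule.sub_mem _ (Submodule.subset_span hy) hxs
  · refine Submodule.span_le.2 fun y hy => ?_
    simpa using Submodule.add_mem_sup (vsub_mem_vectorSpan K hy hx)
      (Submodule.mem_span_singleton_self x)

theorem exists_dual_eq_one_iff_notMem_vectorSpan {K M : Type*} [Field K] [AddCommGroup M]
    [Module K M] {s : Set M} {x : M} (hx : x ∈ s) :
    (∃ l : Module.Dual K M, ∀ y ∈ s, l y = 1) ↔ x ∉ vectorSpan K s := by
  constructor
  · rintro ⟨l, hl⟩ hmem
    have hker : vectorSpan K s ≤ LinearMap.ker l := by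
      rw [vectorSpan_eq_span_vsub_set_right K hx, Submodule.span_le]
      rintro _ ⟨y, hy, rfl⟩
      simp [hl y hy, hl x hx]
    exact one_ne_zero ((hl x hx).symm.trans (hker hmem))
  · intro hmem
    obtain ⟨l, hlx, hker⟩ := Submodule.exists_le_ker_of_notMem hmem
    refine ⟨(l x)⁻¹ • l, fun y hy => ?_⟩
    have hxy : l y = l x := by
      simpa [sub_eq_zero] using hker (vsub_mem_vectorSpan K hy hx)
    simp [hxy, hlx]

open Classical in
theorem polyDim_convexHull {V : Type*} [Finite V] (s : Set (V → ℝ)) :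
    polyDim (convexHull ℝ s) = Module.finrank ℝ (Submodule.span ℝ s) -
      if ∃ l : Module.Dual ℝ (V → ℝ), ∀ x ∈ s, l x = 1 then 1 else 0 := by
  rcases s.eq_empty_or_nonempty with rfl | ⟨x, hx⟩
  · rw [Submodule.span_empty, finrank_bot]
    simp [polyDim]
  · have hne : convexHull ℝ s ≠ ∅ := (convexHull_nonempty_iff.2 ⟨x, hx⟩).ne_empty
    rw [polyDim, if_neg hne, affineSpan_convexHull, direction_affineSpan,
      exists_dual_eq_one_iff_notMem_vectorSpan hx, ← vectorSpan_sup_span_singleton hx]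
    by_cases hmem : x ∈ vectorSpan ℝ s
    · rw [if_neg (not_not.2 hmem),
        sup_eq_left.2 ((Submodule.span_singleton_le_iff_mem _ _).2 hmem), sub_zero]
    · rw [if_pos hmem, Submodule.finrank_sup_span_singleton hmem, Nat.cast_add, Nat.cast_one,
        add_sub_cancel_right]

theorem isFaceOf_iff_exists_linearMap {V : Type*} {F P : Set (V → ℝ)} :
    IsFaceOf F P ↔ ∃ (l : (V → ℝ) →ₗ[ℝ] ℝ) (c : ℝ),
      (∀ x ∈ P, l x ≤ c) ∧ F = {x ∈ P | l x = c} := by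
  refine ⟨?_, .inr⟩
  rintro (rfl | h)
  exacts [⟨0, 0, by simp⟩, h]

section Acyclic

variable {α β : Type*} {E : Set (α × α)}

theorem exists_closed_walk_of_transGen {r : α → α → Prop} {a : α} (h : Relation.TransGen r a a) :
    ∃ (n : ℕ) (v : Fin (n + 2) → α), v 0 = v (Fin.last (n + 1)) ∧
      ∀ i : Fin (n + 1), r (v i.castSucc) (v i.succ) := by
  obtain ⟨b, hab, hba⟩ := Relation.TransGen.head'_iff.1 h
  obtain ⟨l, hchain, hlast⟩ := List.exists_isChain_cons_of_relationReflTransGen hba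
  refine ⟨l.length, fun i => (a :: b :: l)[i], ?_, fun i => ?_⟩
  · simpa [List.getLast_eq_getElem] using hlast.symm
  · exact List.isChain_iff_getElem.1 (hchain.cons_cons hab) i (by simp; omega)

theorem exists_nat_lt_of_transGen_irrefl [Finite α] {r : α → α → Prop}
    (hr : ∀ a, ¬ Relation.TransGen r a a) : ∃ f : α → ℕ, ∀ a b, r a b → f a < f b := by
  refine ⟨fun a => {x | Relation.TransGen r x a}.ncard, fun a b hab => ?_⟩
  refine Set.ncard_lt_ncard ⟨fun x hx => hx.tail hab, fun hba => hr a ?_⟩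
  exact hba (.single hab)

theorem isAcyclicQ_of_forall_lt [Preorder β] {f : α → β} (hf : ∀ e ∈ E, f e.1 < f e.2) :
    IsAcyclicQ E := by
  rintro ⟨n, v, hn, hclosed, hv⟩
  have hmono : StrictMono (f ∘ v) := Fin.strictMono_iff_lt_succ.2 fun i => hf _ (hv i)
  have hlt : (0 : Fin (n + 1)) < Fin.last n := Fin.lt_def.2 (by simp; omega)
  exact (hmono hlt).ne (congrArg f hclosed)

theorem loopless_and_isAcyclicQ_iff [Finite α] :
    ((∀ a, (a, a) ∉ E) ∧ IsAcyclicQ E) ↔ ∃ f : α → ℝ, ∀ e ∈ E, f e.1 < f e.2 := by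
  constructor
  · rintro ⟨hloop, hacyclic⟩
    have hirrefl : ∀ a, ¬ Relation.TransGen (edgeRel E) a a := by
      intro a ha
      obtain ⟨_ | n, v, hclosed, hv⟩ := exists_closed_walk_of_transGen ha
      · refine hloop (v 0) ?_
        nth_rewrite 2 [hclosed]
        exact hv 0
      · exact hacyclic ⟨n + 2, v, by omega, hclosed, hv⟩
    obtain ⟨f, hf⟩ := exists_nat_lt_of_transGen_irrefl hirrefl
    exact ⟨fun a => f a, fun e he => Nat.cast_lt.2 (hf e.1 e.2 he)⟩
  · rintro ⟨f, hf⟩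
    exact ⟨fun a ha => (hf (a, a) ha).false, isAcyclicQ_of_forall_lt hf⟩

end Acyclic

section Quiver

variable {V : Type*} {E Q1 R1 : Set (V × V)}

theorem componentsFull_iff_contraction_loopless :
    ComponentsFull Q1 R1 ↔ ∀ a, (a, a) ∉ contraction Q1 R1 := by
  have hmk (v w : V) : Quot.mk (Relation.EqvGen (edgeRel R1)) v = Quot.mk _ w ↔
      Relation.EqvGen (edgeRel R1) v w := by
    rw [Quot.eq, (Relation.EqvGen.is_equivalence _).eqvGen_iff]
  constructor
  · rintro hfull a ⟨e, ⟨heQ, heR⟩, ha⟩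
    obtain ⟨h1, h2⟩ := Prod.mk.inj ha
    exact heR (hfull e.1 e.2 ((hmk _ _).1 (h1.symm.trans h2)) heQ)
  · intro hloop v w hvw hQ
    by_contra hR
    exact hloop (Quot.mk _ v) ⟨(v, w), ⟨hQ, hR⟩, by rw [(hmk v w).2 hvw]⟩

/-- The functions on the vertices that are constant on connected components, as pullbacks of the
functions on `π₀`. -/
def componentwiseConst (E : Set (V × V)) : Submodule ℝ (V → ℝ) :=
  LinearMap.range (LinearMap.funLeft ℝ ℝ (Quot.mk (Relation.EqvGen (edgeRel E))))

theorem mem_componentwiseConst {lam : V → ℝ} :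
    lam ∈ componentwiseConst E ↔ ∀ e ∈ E, lam e.1 = lam e.2 := by
  constructor
  · rintro ⟨f, rfl⟩ e he
    exact congrArg f (Quot.sound (.rel _ _ he))
  · intro h
    have hconst : ∀ a b, Relation.EqvGen (edgeRel E) a b → lam a = lam b := by
      intro a b hab
      induction hab with
      | rel x y hxy => exact h (x, y) hxy
      | refl x => rfl
      | symm x y _ ih => exact ih.symm
      | trans x y z _ _ ihxy ihyz => exact ihxy.trans ihyz
    exact ⟨Quot.lift lam hconst, rfl⟩

theorem finrank_componentwiseConst [Finite V] (E : Set (V × V)) :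
    Module.finrank ℝ (componentwiseConst E) = numComponents E := by
  have : Finite (Quot (Relation.EqvGen (edgeRel E))) := Quot.finite _
  cases nonempty_fintype (Quot (Relation.EqvGen (edgeRel E)))
  rw [componentwiseConst, LinearMap.finrank_range_of_inj
    (LinearMap.funLeft_injective_of_surjective ℝ ℝ _ Quot.mk_surjective),
    Module.finrank_fintype_fun_eq_card, numComponents, Nat.card_eq_fintype_card]

section Polytope

variable [DecidableEq V]

theorem dotProductEquiv_epsVec [Fintype V] (lam : V → ℝ) (e : V × V) :
    dotProductEquiv ℝ V lam (epsVec e) = lam e.1 - lam e.2 := by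
  simp [dotProduct, epsVec, mul_sub, Finset.sum_sub_distrib]

theorem finrank_span_epsVec_add_numComponents [Fintype V] (E : Set (V × V)) :
    Module.finrank ℝ (Submodule.span ℝ (epsVec '' E)) + numComponents E = Fintype.card V := by
  have hann : (componentwiseConst E).map (dotProductEquiv ℝ V).toLinearMap =
      (Submodule.span ℝ (epsVec '' E)).dualAnnihilator := by
    ext l
    obtain ⟨lam, rfl⟩ := (dotProductEquiv ℝ V).surjective l
    rw [← SetLike.mem_coe (p := Submodule.dualAnnihilator _), Submodule.coe_dualAnnihilator_span,
      Submodule.mem_map_equiv, LinearEquiv.symm_apply_apply, mem_componentwiseConst]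
    simp only [Set.mem_ofPred_eq, Set.subset_def, Set.forall_mem_image, SetLike.mem_coe,
      LinearMap.mem_ker, dotProductEquiv_epsVec, sub_eq_zero]
  rw [← finrank_componentwiseConst, ← (dotProductEquiv ℝ V).finrank_map_eq (componentwiseConst E),
    hann, Subspace.finrank_add_finrank_dualAnnihilator_eq, Module.finrank_fintype_fun_eq_card]

theorem hasRankFn_iff_exists_dual_eq_one [Finite V] :
    HasRankFn E ↔ ∃ l : Module.Dual ℝ (V → ℝ), ∀ x ∈ epsVec '' E, l x = 1 := by
  cases nonempty_fintype V
  rw [(dotProductEquiv ℝ V).surjective.exists, HasRankFn, (Equiv.neg (V → ℝ)).exists_congr_left]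
  refine exists_congr fun lam => ?_
  simp only [Set.forall_mem_image, dotProductEquiv_epsVec]
  refine forall₂_congr fun e _ => ?_
  simp only [Equiv.neg_symm, Equiv.neg_apply, Pi.neg_apply]
  constructor <;> intro h <;> linarith

open Classical in
theorem polyDim_DE [Fintype V] (E : Set (V × V)) :
    polyDim (DE E) =
      (Fintype.card V : ℤ) - numComponents E - if HasRankFn E then 1 else 0 := by
  rw [DE, polyDim_convexHull, ← hasRankFn_iff_exists_dual_eq_one,
    ← finrank_span_epsVec_add_numComponents E, Nat.cast_add, add_sub_cancel_right]

theorem numComponents_eq_of_polyDim_eq_sub_one [Finite V] (hsub : R1 ⊆ Q1)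
    (hdim : polyDim (DE R1) = polyDim (DE Q1) - 1) :
    (numComponents R1 = numComponents Q1 + 1 ∧ (HasRankFn R1 → HasRankFn Q1)) ∨
      numComponents R1 = numComponents Q1 := by
  cases nonempty_fintype V
  have hmono : HasRankFn Q1 → HasRankFn R1 := fun ⟨ρ, hρ⟩ => ⟨ρ, fun e he => hρ e (hsub he)⟩
  rw [polyDim_DE, polyDim_DE] at hdim
  split_ifs at hdim with hR hQ hQ
  · exact .inl ⟨by omega, fun _ => hQ⟩
  · exact .inr (by omega)
  · exact absurd (hmono hQ) hR
  · exact .inl ⟨by omega, fun h => absurd h hR⟩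

theorem epsVec_apply_sub_lt_two {e f : V × V} (hfe : f ≠ e) :
    epsVec e f.1 - epsVec e f.2 < 2 := by
  obtain ⟨v, w⟩ := e
  obtain ⟨a, b⟩ := f
  simp only [epsVec]
  grind

theorem epsVec_mem_DE_iff [Finite V] {e : V × V} (he : e.1 ≠ e.2) :
    epsVec e ∈ DE E ↔ e ∈ E := by
  cases nonempty_fintype V
  refine ⟨fun hmem => ?_, fun h => subset_convexHull ℝ _ ⟨e, h, rfl⟩⟩
  by_contra hE
  have hlt : DE E ⊆ {x | dotProductEquiv ℝ V (epsVec e) x < 2} := by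
    refine convexHull_min ?_ (convex_halfSpace_lt (LinearMap.isLinear _) 2)
    rintro _ ⟨f, hf, rfl⟩
    rw [Set.mem_ofPred_eq, dotProductEquiv_epsVec]
    exact epsVec_apply_sub_lt_two (ne_of_mem_of_not_mem hf hE)
  have hself := hlt hmem
  rw [Set.mem_ofPred_eq, dotProductEquiv_epsVec] at hself
  norm_num [epsVec, he, he.symm] at hself

end Polytope

/-- A potential `lam` and a level `c` whose linear functional `x ↦ ∑ v, lam v * x v` equals `c` at
the vectors `ε_e` of the edges of `R1` and is smaller at those of the remaining edges of `Q1`. -/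
structure IsSupportingPotential (Q1 R1 : Set (V × V)) (lam : V → ℝ) (c : ℝ) : Prop where
  sub_eq : ∀ e ∈ R1, lam e.1 - lam e.2 = c
  sub_lt : ∀ e ∈ Q1 \ R1, lam e.1 - lam e.2 < c

theorem isFaceOf_DE_iff_exists_isSupportingPotential [Finite V] [DecidableEq V] (hsub : R1 ⊆ Q1)
    (hloop : ∀ v, (v, v) ∉ Q1 \ R1) :
    IsFaceOf (DE R1) (DE Q1) ↔ ∃ lam c, IsSupportingPotential Q1 R1 lam c := by
  cases nonempty_fintype V
  rw [isFaceOf_iff_exists_linearMap, (dotProductEquiv ℝ V).surjective.exists]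
  refine exists₂_congr fun lam c => ?_
  constructor
  · rintro ⟨hle, hF⟩
    have hmem_iff : ∀ e ∈ Q1, epsVec e ∈ DE R1 ↔ lam e.1 - lam e.2 = c := by
      intro e he
      have heQ : epsVec e ∈ DE Q1 := subset_convexHull ℝ _ ⟨e, he, rfl⟩
      rw [hF, Set.mem_sep_iff, dotProductEquiv_epsVec, and_iff_right heQ]
    refine ⟨fun e he => (hmem_iff e (hsub he)).1 (subset_convexHull ℝ _ ⟨e, he, rfl⟩),
      fun e he => lt_of_le_of_ne ?_ fun heq => he.2 ?_⟩
    · rw [← dotProductEquiv_epsVec]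
      exact hle _ (subset_convexHull ℝ _ ⟨e, he.1, rfl⟩)
    · have hne : e.1 ≠ e.2 := fun h => hloop e.1 (by rwa [← Prod.eta e, ← h] at he)
      exact (epsVec_mem_DE_iff hne).1 ((hmem_iff e he.1).2 heq)
  · intro h
    have hR : ∀ x ∈ epsVec '' R1, dotProductEquiv ℝ V lam x = c := by
      rintro _ ⟨e, he, rfl⟩
      rw [dotProductEquiv_epsVec, h.sub_eq e he]
    have hQR : ∀ x ∈ epsVec '' Q1 \ epsVec '' R1, dotProductEquiv ℝ V lam x < c := by
      rintro _ ⟨⟨e, he, rfl⟩, heR⟩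
      rw [dotProductEquiv_epsVec]
      exact h.sub_lt e ⟨he, fun hR => heR ⟨e, hR, rfl⟩⟩
    refine ⟨convexHull_min (fun x hx => ?_) (convex_halfSpace_le (LinearMap.isLinear _) c),
      (sep_convexHull_eq_convexHull (Set.image_mono hsub) hR hQR).symm⟩
    by_cases hxR : x ∈ epsVec '' R1
    exacts [(hR x hxR).le, (hQR x ⟨hx, hxR⟩).le]

theorem exists_isSupportingPotential_zero_iff [Finite V] :
    (∃ lam, IsSupportingPotential Q1 R1 lam 0) ↔
      ComponentsFull Q1 R1 ∧ IsAcyclicQ (contraction Q1 R1) := by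
  rw [componentsFull_iff_contraction_loopless, loopless_and_isAcyclicQ_iff]
  constructor
  · rintro ⟨lam, h⟩
    obtain ⟨f, rfl⟩ := mem_componentwiseConst.2 fun e he => sub_eq_zero.1 (h.sub_eq e he)
    refine ⟨f, ?_⟩
    rintro _ ⟨e, he, rfl⟩
    exact sub_neg.1 (h.sub_lt e he)
  · rintro ⟨f, hf⟩
    exact ⟨fun v => f (Quot.mk _ v),
      fun e he => sub_eq_zero.2 (congrArg f (Quot.sound (.rel _ _ he))),
      fun e he => sub_neg.2 (hf _ ⟨e, he, rfl⟩)⟩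

namespace IsSupportingPotential

variable {lam : V → ℝ} {c : ℝ}

theorem neg_div_add_one (h : IsSupportingPotential Q1 R1 lam c) (hc : c ≠ 0) :
    ∀ e ∈ R1, -lam e.1 / c + 1 = -lam e.2 / c := by
  intro e he
  have heq := h.sub_eq e he
  field_simp
  linarith

theorem exists_zero (h : IsSupportingPotential Q1 R1 lam c) (hsub : R1 ⊆ Q1)
    (hrank : HasRankFn R1 → HasRankFn Q1) : ∃ mu, IsSupportingPotential Q1 R1 mu 0 := by
  by_cases hc : c = 0
  · exact ⟨lam, hc ▸ h⟩
  · obtain ⟨σ, hσ⟩ := hrank ⟨fun v => -lam v / c, h.neg_div_add_one hc⟩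
    have hsub_eq : ∀ e ∈ Q1,
        (lam e.1 + c * σ e.1) - (lam e.2 + c * σ e.2) = lam e.1 - lam e.2 - c := by
      intro e he
      rw [← hσ e he]
      ring
    refine ⟨fun v => lam v + c * σ v, fun e he => ?_, fun e he => ?_⟩
    · rw [hsub_eq e (hsub he), h.sub_eq e he, sub_self]
    · rw [hsub_eq e he.1]
      exact sub_neg.2 (h.sub_lt e he)

theorem numComponents_lt [Finite V] (h : IsSupportingPotential Q1 R1 lam 0) (hsub : R1 ⊂ Q1) :
    numComponents Q1 < numComponents R1 := by
  obtain ⟨e, heQ, heR⟩ := Set.exists_of_ssubset hsub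
  have hle : componentwiseConst Q1 ≤ componentwiseConst R1 := fun mu hmu =>
    mem_componentwiseConst.2 fun f hf => mem_componentwiseConst.1 hmu f (hsub.subset hf)
  have hlamR : lam ∈ componentwiseConst R1 :=
    mem_componentwiseConst.2 fun f hf => sub_eq_zero.1 (h.sub_eq f hf)
  have hlamQ : lam ∉ componentwiseConst Q1 := fun hmem =>
    (h.sub_lt e ⟨heQ, heR⟩).ne (sub_eq_zero.2 (mem_componentwiseConst.1 hmem e heQ))
  rw [← finrank_componentwiseConst, ← finrank_componentwiseConst]
  exact Submodule.finrank_lt_finrank_of_lt (SetLike.lt_iff_le_and_exists.2 ⟨hle, lam, hlamR, hlamQ⟩)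

end IsSupportingPotential

theorem exists_isSupportingPotential_ne_zero_iff :
    (∃ lam c, c ≠ 0 ∧ IsSupportingPotential Q1 R1 lam c) ↔
      ∃ ρ : V → ℝ, (∀ e ∈ R1, ρ e.1 + 1 = ρ e.2) ∧
        ∀ e ∈ Q1 \ R1, ∀ e' ∈ Q1 \ R1,
          0 < (ρ e.1 - ρ e.2 + 1) * (ρ e'.1 - ρ e'.2 + 1) := by
  have hsign (ρ : V → ℝ) :=
    forall_mul_pos_iff (s := Q1 \ R1) (g := fun e => ρ e.1 - ρ e.2 + 1)
  simp only [hsign]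
  constructor
  · rintro ⟨lam, c, hc, h⟩
    have hdiv : ∀ e : V × V,
        -lam e.1 / c - -lam e.2 / c + 1 = (c - (lam e.1 - lam e.2)) / c := by
      intro e
      field_simp
      ring
    refine ⟨fun v => -lam v / c, h.neg_div_add_one hc, ?_⟩
    simp only [hdiv]
    rcases hc.lt_or_gt with hneg | hpos
    · exact .inr fun e he => div_neg_of_pos_of_neg (sub_pos.2 (h.sub_lt e he)) hneg
    · exact .inl fun e he => div_pos (sub_pos.2 (h.sub_lt e he)) hpos
  · rintro ⟨ρ, hρ, hpos | hneg⟩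
    · refine ⟨-ρ, 1, one_ne_zero, fun e he => ?_, fun e he => ?_⟩
      · simp only [Pi.neg_apply]
        linarith [hρ e he]
      · simp only [Pi.neg_apply]
        linarith [hpos e he]
    · refine ⟨ρ, -1, by norm_num, fun e he => ?_, fun e he => ?_⟩
      · linarith [hρ e he]
      · linarith [hneg e he]

end Quiver

/-- Theorem 2 (characterization of facets of the directed edge polytope). -/
theorem facet_characterization {V : Type*} [Fintype V] [DecidableEq V]
    (Q1 R1 : Set (V × V)) (hloop : ∀ v : V, (v, v) ∉ Q1) (hsub : R1 ⊆ Q1)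
    (hdim : polyDim (DE R1) = polyDim (DE Q1) - 1) :
    IsFacetOf (DE R1) (DE Q1) ↔
      ((numComponents R1 = numComponents Q1 + 1 ∧ ComponentsFull Q1 R1 ∧
          IsAcyclicQ (contraction Q1 R1)) ∨
        (numComponents R1 = numComponents Q1 ∧
          ∃ ρ : V → ℝ, (∀ e ∈ R1, ρ e.1 + 1 = ρ e.2) ∧
            ∀ e ∈ Q1 \ R1, ∀ e' ∈ Q1 \ R1,
              0 < (ρ e.1 - ρ e.2 + 1) * (ρ e'.1 - ρ e'.2 + 1))) := by
  have hssub : R1 ⊂ Q1 := hsub.ssubset_of_ne (by rintro rfl; omega)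
  rw [IsFacetOf, and_iff_left hdim, isFaceOf_DE_iff_exists_isSupportingPotential hsub
    fun v hv => hloop v hv.1, ← exists_isSupportingPotential_zero_iff,
    ← exists_isSupportingPotential_ne_zero_iff]
  constructor
  · rintro ⟨lam, c, h⟩
    rcases numComponents_eq_of_polyDim_eq_sub_one hsub hdim with ⟨hcard, hrank⟩ | hcard
    · exact .inl ⟨hcard, h.exists_zero hsub hrank⟩
    · have hc : c ≠ 0 := by
        rintro rfl
        exact (h.numComponents_lt hssub).ne' hcard
      exact .inr ⟨hcard, lam, c, hc, h⟩
  · rintro (⟨-, lam, h⟩ | ⟨-, lam, c, -, h⟩)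
    exacts [⟨lam, 0, h⟩, ⟨lam, c, h⟩]
end

section
/- Let G be a finite simple graph with vertex set G_0 and let R be a lluf subquiver of the double D(G) with dim DE(R) = dim SE(G) − 1. Then DE(R) is a facet of SE(G) if and only if |π_0(R)| = |π_0(D(G))| and there exists a function ρ ∈ ℝ^{G_0} such that for every (v,w) ∈ D(G)_1: ρ(v)−ρ(w) = 1 if (v,w)∈R_1, ρ(v)−ρ(w) = −1 if (w,v)∈R_1, and ρ(v)−ρ(w) = 0 otherwise. -/
open scoped BigOperators

/-- The edge set of the double `D(G)` of a simple graph `G`. -/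
def doubleEdges {V : Type*} (G : SimpleGraph V) : Set (V × V) :=
  {p : V × V | G.Adj p.1 p.2}

/-!
A linear functional on the `ε_e` is given by a function `ρ` on the vertices, sending `ε_(v,w)` to
`ρ v - ρ w`. So the faces of `DE(E)` are the `DE(R)` where `R` consists of the edges along which
some `ρ` attains its largest drop `c`. If `E` is symmetric and `R ≠ E`, then `c > 0`, and we may
rescale to `c = 1`.

When `DE(R)` is a facet, `span {ε_e | e ∈ R}` has dimension `dim DE(R) + 1`, because the affine span
of `DE(R)` avoids the origin, and this is the dimension of `span {ε_e | e ∈ E}`, because `DE(E)`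
contains the origin. The two spans are therefore equal, so `R` and `E` have the same components.
Along a walk in `R` the values of `ρ` change by integers; hence the drop along an edge of `E` is an
integer of absolute value at most `1`, and it is `0` if neither the edge nor its reverse lies in
`R`.
-/

section LinearAlgebra

variable {k M : Type*}

theorem exists_linearMap_apply_single {ι : Type*} [DecidableEq ι] [Field k] (ρ : ι → k) :
    ∃ l : (ι → k) →ₗ[k] k, ∀ i, l (Pi.single i 1) = ρ i := by
  obtain ⟨g, hg⟩ := (Finsupp.linearCombination k fun i : ι ↦ Pi.single i (1 : k))
    |>.exists_leftInverse_of_injective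
      (LinearMap.ker_eq_bot.mpr (Pi.linearIndependent_single_one ι k))
  refine ⟨Finsupp.linearCombination k ρ ∘ₗ g, fun i ↦ ?_⟩
  have hgi : g (Pi.single i 1) = Finsupp.single i 1 := by
    simpa using LinearMap.congr_fun hg (Finsupp.single i 1)
  simp [hgi]

theorem vectorSpan_le_span [Ring k] [AddCommGroup M] [Module k M] (s : Set M) :
    vectorSpan k s ≤ Submodule.span k s := by
  rw [vectorSpan_def, Submodule.span_le]
  rintro _ ⟨x, hx, y, hy, rfl⟩
  exact Submodule.sub_mem _ (Submodule.subset_span hx) (Submodule.subset_span hy)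

theorem vectorSpan_eq_span_of_neg_mem [DivisionRing k] [NeZero (2 : k)] [AddCommGroup M]
    [Module k M] {s : Set M} (hs : ∀ x ∈ s, -x ∈ s) : vectorSpan k s = Submodule.span k s := by
  refine (vectorSpan_le_span s).antisymm (Submodule.span_le.mpr fun x hx ↦ ?_)
  have hmem : x - -x ∈ vectorSpan k s := vsub_mem_vectorSpan k hx (hs x hx)
  rw [sub_neg_eq_add, ← two_smul k] at hmem
  exact (Submodule.smul_mem_iff _ two_ne_zero).mp hmem

theorem vectorSpan_lt_span_of_eq_const [Ring k] [AddCommGroup M] [Module k M] {s : Set M}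
    (hs : s.Nonempty) {l : M →ₗ[k] k} {c : k} (hc : c ≠ 0) (hl : ∀ x ∈ s, l x = c) :
    vectorSpan k s < Submodule.span k s := by
  have hker : vectorSpan k s ≤ LinearMap.ker l := by
    rw [vectorSpan_def, Submodule.span_le]
    rintro _ ⟨x, hx, y, hy, rfl⟩
    simp [hl x hx, hl y hy]
  obtain ⟨x, hx⟩ := hs
  refine SetLike.lt_iff_le_and_exists.mpr ⟨vectorSpan_le_span s, x, Submodule.subset_span hx, ?_⟩
  exact fun hxs ↦ hc ((hl x hx).symm.trans (hker hxs))

theorem convexHull_sep_eq_of_le [Field k] [LinearOrder k] [IsStrictOrderedRing k]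
    [AddCommGroup M] [Module k M] {s : Set M} {l : M →ₗ[k] k} {c : k} (hl : ∀ x ∈ s, l x ≤ c) :
    {x ∈ convexHull k s | l x = c} = convexHull k {x ∈ s | l x = c} := by
  apply Set.Subset.antisymm
  · suffices hhull : convexHull k s ⊆
        {x | l x ≤ c ∧ (l x = c → x ∈ convexHull k {x ∈ s | l x = c})} by
      rintro x ⟨hx, hxc⟩
      exact (hhull hx).2 hxc
    refine convexHull_min (fun x hx ↦ ⟨hl x hx, fun hxc ↦ subset_convexHull k _ ⟨hx, hxc⟩⟩)
      (convex_iff_forall_pos.mpr ?_)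
    rintro x ⟨hx, hxs⟩ y ⟨hy, hys⟩ a b ha hb hab
    have hmap : l (a • x + b • y) = a * l x + b * l y := by simp
    have hsum : a * c + b * c = c := by rw [← add_mul, hab, one_mul]
    have hax : a * l x ≤ a * c := by gcongr
    have hby : b * l y ≤ b * c := by gcongr
    refine ⟨by linarith, fun heq ↦ convex_convexHull k _ (hxs ?_) (hys ?_) ha.le hb.le hab⟩
    · exact mul_left_cancel₀ ha.ne' (by linarith)
    · exact mul_left_cancel₀ hb.ne' (by linarith)
  · exact convexHull_min (fun x hx ↦ ⟨subset_convexHull k s hx.1, hx.2⟩)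
      ((convex_convexHull k s).inter (convex_hyperplane l.isLinear c))

end LinearAlgebra

section EdgeVectors

variable {V : Type*} [DecidableEq V] {E R : Set (V × V)}

theorem epsVec_eq_single_sub_single (e : V × V) :
    epsVec e = Pi.single e.1 1 - Pi.single e.2 1 := by
  funext u
  simp [epsVec, Pi.single_apply]

theorem epsVec_swap (e : V × V) : epsVec e.swap = -epsVec e := by
  simp [epsVec_eq_single_sub_single]

theorem exists_linearMap_epsVec (ρ : V → ℝ) :
    ∃ l : (V → ℝ) →ₗ[ℝ] ℝ, ∀ e, l (epsVec e) = ρ e.1 - ρ e.2 := by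
  obtain ⟨l, hl⟩ := exists_linearMap_apply_single ρ
  exact ⟨l, fun e ↦ by rw [epsVec_eq_single_sub_single, map_sub, hl, hl]⟩

theorem epsVec_mem_DE {e : V × V} (he : e ∈ E) : epsVec e ∈ DE E :=
  subset_convexHull ℝ _ (Set.mem_image_of_mem _ he)

theorem epsVec_sub_lt_two {e f : V × V} (hef : e ≠ f) : epsVec e f.1 - epsVec e f.2 < 2 := by
  have hne : ¬(f.1 = e.1 ∧ f.2 = e.2) := fun h ↦ hef (Prod.ext h.1.symm h.2.symm)
  unfold epsVec
  grind

theorem epsVec_mem_DE_iff_s3 {f : V × V} (hf : f.1 ≠ f.2) : epsVec f ∈ DE E ↔ f ∈ E := by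
  refine ⟨fun hmem ↦ ?_, epsVec_mem_DE⟩
  by_contra hfE
  have hlt : DE E ⊆ {x | x f.1 - x f.2 < 2} := by
    have hlinear : IsLinearMap ℝ fun x : V → ℝ ↦ x f.1 - x f.2 :=
      ⟨fun x y ↦ add_sub_add_comm .., fun a x ↦ (mul_sub ..).symm⟩
    refine convexHull_min ?_ (convex_halfSpace_lt hlinear 2)
    rintro _ ⟨e, he, rfl⟩
    exact epsVec_sub_lt_two (ne_of_mem_of_not_mem he hfE)
  have hval : epsVec f f.1 - epsVec f f.2 = 2 := by
    simp [epsVec, hf, hf.symm]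
    norm_num
  exact (hlt hmem).ne hval

theorem vectorSpan_epsVec_eq_span (hsymm : ∀ e ∈ E, e.swap ∈ E) :
    vectorSpan ℝ (epsVec '' E) = Submodule.span ℝ (epsVec '' E) := by
  apply vectorSpan_eq_span_of_neg_mem
  rintro _ ⟨e, he, rfl⟩
  exact ⟨e.swap, hsymm e he, epsVec_swap e⟩

theorem polyDim_DE_empty : polyDim (DE (∅ : Set (V × V))) = -1 := by
  simp [polyDim, DE]

theorem polyDim_DE_s3 (hE : E.Nonempty) :
    polyDim (DE E) = Module.finrank ℝ (vectorSpan ℝ (epsVec '' E)) := by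
  have hne : DE E ≠ ∅ := ((hE.image epsVec).convexHull (𝕜 := ℝ)).ne_empty
  rw [polyDim, if_neg hne, DE, affineSpan_convexHull, direction_affineSpan]

end EdgeVectors

section Faces

variable {V : Type*} {E R : Set (V × V)} {ρ : V → ℝ} {c : ℝ}

/-- The function `ρ` on the vertices exposes the subquiver `R` of `E` at height `c`: the drop of `ρ`
along an edge of `E` is at most `c`, with equality exactly on `R`. This is the supporting hyperplane
`{∑ v, ρ v * x v = c}` of `DE E`, read off on the vertices of the graph. -/
structure Exposes (ρ : V → ℝ) (c : ℝ) (E R : Set (V × V)) : Prop where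
  drop_le : ∀ e ∈ E, ρ e.1 - ρ e.2 ≤ c
  eq_sep : R = {e ∈ E | ρ e.1 - ρ e.2 = c}

namespace Exposes

theorem drop_eq (h : Exposes ρ c E R) {e : V × V} (he : e ∈ R) : ρ e.1 - ρ e.2 = c :=
  (h.eq_sep.subset he).2

theorem drop_lt (h : Exposes ρ c E R) {e : V × V} (he : e ∈ E) (heR : e ∉ R) :
    ρ e.1 - ρ e.2 < c :=
  lt_of_le_of_ne (h.drop_le e he) fun heq ↦ heR (h.eq_sep.superset ⟨he, heq⟩)

theorem div_const (h : Exposes ρ c E R) (hc : 0 < c) : Exposes (fun v ↦ ρ v / c) 1 E R where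
  drop_le e he := by
    rw [← sub_div]
    exact (div_le_one hc).mpr (h.drop_le e he)
  eq_sep := by
    simp only [h.eq_sep, ← sub_div, div_eq_one_iff_eq hc.ne']

theorem pos (h : Exposes ρ c E R) (hsymm : ∀ e ∈ E, e.swap ∈ E) (hRE : R ≠ E) : 0 < c := by
  have hR : R ⊂ E := (h.eq_sep.subset.trans (Set.sep_subset _ _)).ssubset_of_ne hRE
  obtain ⟨e, he, heR⟩ := Set.exists_of_ssubset hR
  have hdrop := h.drop_lt he heR
  have hswap := h.drop_le e.swap (hsymm e he)
  simp only [Prod.fst_swap, Prod.snd_swap] at hswap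
  linarith

theorem isFaceOf [DecidableEq V] (h : Exposes ρ c E R) : IsFaceOf (DE R) (DE E) := by
  obtain ⟨l, hl⟩ := exists_linearMap_epsVec ρ
  have hle : ∀ x ∈ epsVec '' E, l x ≤ c := by
    rintro _ ⟨e, he, rfl⟩
    exact (hl e).trans_le (h.drop_le e he)
  have himage : epsVec '' R = {x ∈ epsVec '' E | l x = c} := by
    rw [h.eq_sep]
    ext x
    simp only [Set.mem_image, Set.mem_ofPred_eq, ← hl]
    grind
  refine Or.inr ⟨l, c, convexHull_min hle (convex_halfSpace_le l.isLinear c), ?_⟩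
  rw [DE, DE, himage, convexHull_sep_eq_of_le hle]

end Exposes

theorem exists_exposes_of_isFaceOf [DecidableEq V] (hloop : ∀ e ∈ E, e.1 ≠ e.2) (hRE : R ⊆ E)
    (hface : IsFaceOf (DE R) (DE E)) : ∃ ρ c, Exposes ρ c E R := by
  rcases hface with heq | ⟨l, c, hle, hF⟩
  · have hER : R = E := hRE.antisymm fun e he ↦
      (epsVec_mem_DE_iff_s3 (hloop e he)).mp (heq.superset (epsVec_mem_DE he))
    exact ⟨0, 0, by simp, by simp [hER]⟩
  · have hl (e : V × V) : l (epsVec e) = l (Pi.single e.1 1) - l (Pi.single e.2 1) := by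
      rw [epsVec_eq_single_sub_single, map_sub]
    refine ⟨fun v ↦ l (Pi.single v 1), c, fun e he ↦ ?_, ?_⟩
    · exact (hl e).symm.trans_le (hle _ (epsVec_mem_DE he))
    · ext e
      refine ⟨fun he ↦ ⟨hRE he, ?_⟩, fun ⟨he, hec⟩ ↦ ?_⟩
      · exact (hl e).symm.trans (hF.subset (epsVec_mem_DE he)).2
      · exact (epsVec_mem_DE_iff_s3 (hloop e he)).mp
          (hF.superset ⟨epsVec_mem_DE he, (hl e).trans hec⟩)

theorem exists_exposes_one_of_isFaceOf [DecidableEq V] (hloop : ∀ e ∈ E, e.1 ≠ e.2)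
    (hsymm : ∀ e ∈ E, e.swap ∈ E) (hRE : R ⊂ E) (hface : IsFaceOf (DE R) (DE E)) :
    ∃ ρ, Exposes ρ 1 E R := by
  obtain ⟨ρ, c, h⟩ := exists_exposes_of_isFaceOf hloop hRE.subset hface
  exact ⟨_, h.div_const (h.pos hsymm hRE.ne)⟩

end Faces

section Components

variable {V : Type*} [DecidableEq V] {E R : Set (V × V)}

theorem eqvGen_of_epsVec_mem_span {v w : V} (h : epsVec (v, w) ∈ Submodule.span ℝ (epsVec '' R)) :
    Relation.EqvGen (edgeRel R) v w := by
  classical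
  by_contra hvw
  let χ : V → ℝ := fun u ↦ if Relation.EqvGen (edgeRel R) v u then 1 else 0
  obtain ⟨l, hl⟩ := exists_linearMap_epsVec χ
  have hker : Submodule.span ℝ (epsVec '' R) ≤ LinearMap.ker l := by
    rw [Submodule.span_le]
    rintro _ ⟨e, he, rfl⟩
    have hadj : Relation.EqvGen (edgeRel R) e.1 e.2 := .rel _ _ he
    have hiff : Relation.EqvGen (edgeRel R) v e.1 ↔ Relation.EqvGen (edgeRel R) v e.2 :=
      ⟨fun h ↦ h.trans _ _ _ hadj, fun h ↦ h.trans _ _ _ hadj.symm⟩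
    simp [hl, χ, hiff]
  have hzero := hker h
  rw [LinearMap.mem_ker, hl] at hzero
  simp [χ, hvw, Relation.EqvGen.refl] at hzero

theorem eqvGen_le_of_span_le
    (h : Submodule.span ℝ (epsVec '' R) ≤ Submodule.span ℝ (epsVec '' E)) :
    Relation.EqvGen (edgeRel R) ≤ Relation.EqvGen (edgeRel E) :=
  Relation.EqvGen.eqvGen_le fun v w hvw ↦
    eqvGen_of_epsVec_mem_span (h (Submodule.subset_span ⟨(v, w), hvw, rfl⟩))

theorem numComponents_eq_of_span_eq
    (h : Submodule.span ℝ (epsVec '' R) = Submodule.span ℝ (epsVec '' E)) :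
    numComponents R = numComponents E := by
  have hrel : Relation.EqvGen (edgeRel R) = Relation.EqvGen (edgeRel E) :=
    (eqvGen_le_of_span_le h.le).antisymm (eqvGen_le_of_span_le h.ge)
  rw [numComponents, numComponents, hrel]

end Components

section Dimension

variable {V : Type*} [DecidableEq V] {E R : Set (V × V)} {ρ : V → ℝ} {c : ℝ}

theorem polyDim_DE_lt_finrank_span [Module.Finite ℝ (Submodule.span ℝ (epsVec '' R))]
    (hc : c ≠ 0) (hρ : ∀ e ∈ R, ρ e.1 - ρ e.2 = c) :
    polyDim (DE R) < Module.finrank ℝ (Submodule.span ℝ (epsVec '' R)) := by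
  rcases R.eq_empty_or_nonempty with rfl | hR
  · rw [polyDim_DE_empty]
    lia
  · obtain ⟨l, hl⟩ := exists_linearMap_epsVec ρ
    have hconst : ∀ x ∈ epsVec '' R, l x = c := by
      rintro _ ⟨e, he, rfl⟩
      exact (hl e).trans (hρ e he)
    rw [polyDim_DE_s3 hR, Nat.cast_lt]
    exact Submodule.finrank_lt_finrank_of_lt
      (vectorSpan_lt_span_of_eq_const (hR.image epsVec) hc hconst)

theorem polyDim_DE_eq_finrank_span (hsymm : ∀ e ∈ E, e.swap ∈ E) (hE : E.Nonempty) :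
    polyDim (DE E) = Module.finrank ℝ (Submodule.span ℝ (epsVec '' E)) := by
  rw [polyDim_DE_s3 hE, vectorSpan_epsVec_eq_span hsymm]

theorem span_epsVec_eq_of_polyDim_eq_sub_one [Module.Finite ℝ (Submodule.span ℝ (epsVec '' E))]
    (hsymm : ∀ e ∈ E, e.swap ∈ E) (hRE : R ⊂ E) (hc : c ≠ 0)
    (hρ : ∀ e ∈ R, ρ e.1 - ρ e.2 = c) (hdim : polyDim (DE R) = polyDim (DE E) - 1) :
    Submodule.span ℝ (epsVec '' R) = Submodule.span ℝ (epsVec '' E) := by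
  have hle := Submodule.span_mono (R := ℝ) (Set.image_mono (f := epsVec) hRE.subset)
  have := Submodule.finiteDimensional_of_le hle
  have hlt := polyDim_DE_lt_finrank_span hc hρ
  rw [hdim, polyDim_DE_eq_finrank_span hsymm (Set.nonempty_of_ssubset' hRE)] at hlt
  exact Submodule.eq_of_le_of_finrank_le hle (by lia)

end Dimension

section FacetPotentials

variable {V : Type*} {E R : Set (V × V)} {ρ : V → ℝ}

/-- The combinatorial certificate for a facet: `ρ` drops by `1` along the edges of `R`, rises by `1`
along their reverses, and is constant along all other edges of `E`. -/
def IsFacetPotential (ρ : V → ℝ) (E R : Set (V × V)) : Prop :=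
  ∀ v w, (v, w) ∈ E →
    ((v, w) ∈ R → ρ v - ρ w = 1) ∧
    ((w, v) ∈ R → ρ v - ρ w = -1) ∧
    ((v, w) ∉ R ∧ (w, v) ∉ R → ρ v - ρ w = 0)

theorem IsFacetPotential.exposes (h : IsFacetPotential ρ E R) (hRE : R ⊆ E) :
    Exposes ρ 1 E R := by
  have hlt : ∀ v w, (v, w) ∈ E → (v, w) ∉ R → ρ v - ρ w < 1 := by
    intro v w hE hR
    obtain ⟨-, hback, hnone⟩ := h v w hE
    by_cases hR' : (w, v) ∈ R
    · linarith [hback hR']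
    · linarith [hnone ⟨hR, hR'⟩]
  refine ⟨fun e he ↦ ?_, Set.Subset.antisymm (fun e he ↦ ?_) fun e ⟨he, hdrop⟩ ↦ ?_⟩
  · by_cases hR : e ∈ R
    · exact ((h _ _ he).1 hR).le
    · exact (hlt _ _ he hR).le
  · exact ⟨hRE he, (h _ _ (hRE he)).1 he⟩
  · by_contra hR
    exact (hlt _ _ he hR).ne hdrop

theorem exists_int_drop_of_eqvGen (hρ : ∀ e ∈ R, ρ e.1 - ρ e.2 = 1) {v w : V}
    (hvw : Relation.EqvGen (edgeRel R) v w) : ∃ n : ℤ, ρ v - ρ w = n := by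
  induction hvw with
  | rel x y hxy => exact ⟨1, by simpa using hρ _ hxy⟩
  | refl x => exact ⟨0, by simp⟩
  | symm x y _ ih =>
    obtain ⟨n, hn⟩ := ih
    exact ⟨-n, by push_cast; linarith⟩
  | trans x y z _ _ ihxy ihyz =>
    obtain ⟨n, hn⟩ := ihxy
    obtain ⟨m, hm⟩ := ihyz
    exact ⟨n + m, by push_cast; linarith⟩

theorem Exposes.isFacetPotential (h : Exposes ρ 1 E R) (hsymm : ∀ e ∈ E, e.swap ∈ E)
    (hconn : ∀ v w, (v, w) ∈ E → Relation.EqvGen (edgeRel R) v w) : IsFacetPotential ρ E R := by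
  refine fun v w hE ↦ ⟨h.drop_eq, fun hR ↦ ?_, fun ⟨hR, hR'⟩ ↦ ?_⟩
  · rw [← neg_sub, h.drop_eq hR]
  · obtain ⟨n, hn⟩ := exists_int_drop_of_eqvGen (fun _ ↦ h.drop_eq) (hconn v w hE)
    have hlt : ρ v - ρ w < 1 := h.drop_lt hE hR
    have hgt : ρ w - ρ v < 1 := h.drop_lt (hsymm _ hE) hR'
    have habs : |n| < 1 := by
      rw [← Int.cast_lt (R := ℝ), Int.cast_abs, Int.cast_one, ← hn, abs_lt]
      constructor <;> linarith
    rw [hn, Int.abs_lt_one_iff.mp habs, Int.cast_zero]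

end FacetPotentials

/-- Corollary (facets of symmetric edge polytopes). -/
theorem facet_symmetric_edge_polytope {V : Type*} [Fintype V] [DecidableEq V]
    (G : SimpleGraph V) (R1 : Set (V × V)) (hsub : R1 ⊆ doubleEdges G)
    (hdim : polyDim (DE R1) = polyDim (DE (doubleEdges G)) - 1) :
    IsFacetOf (DE R1) (DE (doubleEdges G)) ↔
      (numComponents R1 = numComponents (doubleEdges G) ∧
        ∃ ρ : V → ℝ, ∀ v w : V, G.Adj v w →
          ((v, w) ∈ R1 → ρ v - ρ w = 1) ∧
          ((w, v) ∈ R1 → ρ v - ρ w = -1) ∧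
          ((v, w) ∉ R1 ∧ (w, v) ∉ R1 → ρ v - ρ w = 0)) := by
  have hsymm : ∀ e ∈ doubleEdges G, e.swap ∈ doubleEdges G := fun _ he ↦ G.adj_symm he
  constructor
  · rintro ⟨hface, -⟩
    have hproper : R1 ⊂ doubleEdges G := hsub.ssubset_of_ne fun heq ↦ by
      rw [heq] at hdim
      lia
    obtain ⟨ρ, hρ⟩ :=
      exists_exposes_one_of_isFaceOf (fun _ he ↦ G.ne_of_adj he) hsymm hproper hface
    have hspan : Submodule.span ℝ (epsVec '' R1) = Submodule.span ℝ (epsVec '' doubleEdges G) :=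
      span_epsVec_eq_of_polyDim_eq_sub_one hsymm hproper one_ne_zero (fun _ ↦ hρ.drop_eq) hdim
    have hconn : ∀ v w, (v, w) ∈ doubleEdges G → Relation.EqvGen (edgeRel R1) v w :=
      fun v w hvw ↦ eqvGen_le_of_span_le hspan.ge v w (.rel v w hvw)
    exact ⟨numComponents_eq_of_span_eq hspan, ρ, hρ.isFacetPotential hsymm hconn⟩
  · rintro ⟨-, ρ, hρ : IsFacetPotential ρ (doubleEdges G) R1⟩
    exact ⟨(hρ.exposes hsub).isFaceOf, hdim⟩
end
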